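/- Let N ≥ 3 be an integer and let p be a real number with 1 < p ≤ (3N+2)/(N−2). If u : ℝ^N → ℝ is a smooth function such that ∫_{ℝ^N} u² dx, ∫_{ℝ^N} |∇u|² dx and ∫_{ℝ^N} u²|∇u|² dx are all finite, then ∫_{ℝ^N} |u|^{p+1} dx is finite. -/

import Mathlib

open MeasureTheory Real Filter Topology

noncomputable section

/-- Partial derivative along the `i`-th coordinate direction. -/
def pd {N : ℕ} {F : Type*} [NormedAddCommGroup F] [NormedSpace ℝ F]
    (i : Fin N) (f : EuclideanSpace ℝ (Fin N) → F) (x : EuclideanSpace ℝ (Fin N)) : F :=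
  fderiv ℝ f x (EuclideanSpace.single i 1)

/-- Euclidean Laplacian. -/
def lap {N : ℕ} {F : Type*} [NormedAddCommGroup F] [NormedSpace ℝ F]
    (f : EuclideanSpace ℝ (Fin N) → F) (x : EuclideanSpace ℝ (Fin N)) : F :=
  ∑ i : Fin N, pd i (pd i f) x

/-- Squared norm of the gradient of a real-valued function: `|∇f|²`. -/
def gradsq {N : ℕ} (f : EuclideanSpace ℝ (Fin N) → ℝ) (x : EuclideanSpace ℝ (Fin N)) : ℝ :=
  ∑ i : Fin N, (pd i f x) ^ 2

/-- A ground-state profile of the quasilinear Schrödinger equation (QLS)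
`-Δu - uΔ(u²) + ωu - u^p = 0` on `ℝ^N`: smooth, positive, radially symmetric with a
strictly decreasing positive profile, solves (QLS) pointwise, and decays
exponentially together with all its derivatives. -/
structure IsGroundState (N : ℕ) (ω p : ℝ) (u : EuclideanSpace ℝ (Fin N) → ℝ) : Prop where
  smooth : ContDiff ℝ (⊤ : ℕ∞) u
  pos : ∀ x, 0 < u x
  radial : ∃ U : ℝ → ℝ, StrictAntiOn U (Set.Ici 0) ∧ (∀ r, 0 ≤ r → 0 < U r) ∧
      ∀ x, u x = U ‖x‖
  solves : ∀ x, -lap u x - u x * lap (fun y => (u y) ^ 2) x + ω * u x - (u x) ^ p = 0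
  decay : ∀ k : ℕ, ∃ C > 0, ∃ δ > 0, ∀ x,
      ‖iteratedFDeriv ℝ k u x‖ ≤ C * Real.exp (-δ * ‖x‖)

/-- The linearized operator `L₊` around `u` (real-valued functions). -/
def Lplus {N : ℕ} (ω p : ℝ) (u η : EuclideanSpace ℝ (Fin N) → ℝ)
    (x : EuclideanSpace ℝ (Fin N)) : ℝ :=
  -lap η x - 2 * u x * lap (fun y => u y * η y) x + ω * η x
    - (lap (fun y => (u y) ^ 2) x + p * u x ^ (p - 1)) * η x

/-- The linearized operator `L₋` around `u`. -/
def Lminus {N : ℕ} (ω p : ℝ) (u ζ : EuclideanSpace ℝ (Fin N) → ℝ)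
    (x : EuclideanSpace ℝ (Fin N)) : ℝ :=
  -lap ζ x + ω * ζ x - (lap (fun y => (u y) ^ 2) x + u x ^ (p - 1)) * ζ x

/-! With `w = u²` we have `w ∈ L¹` and `∇w = 2u∇u ∈ L²`, so the Sobolev inequality for `w` puts `u`
in `L^{4N/(N-2)}`; interpolating with `u ∈ L²` gives every exponent in between.

The Sobolev inequality in Mathlib is for compactly supported functions, and `w` is not known a
priori to lie in `L²`, so `∇(φ(εx) w)` is not controlled in `L²`. It is therefore applied to
`φ(εx) ε⁻¹ sin(ε w)`, whose gradient is dominated, uniformly in `ε ≤ 1`, by a multiple of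
`|∇w| + min(1, |w|)`, and `min(1, |w|)` is in `L²` because `w` is in `L¹`; Fatou's lemma then lets
`ε → 0`. -/

open Module Set
open scoped ENNReal NNReal

section Lebesgue

variable {α G : Type*} {mα : MeasurableSpace α} {μ : Measure α} [NormedAddCommGroup G] {f : α → G}

lemma min_one_le_rpow {t θ : ℝ} (ht : 0 ≤ t) (hθ₀ : 0 ≤ θ) (hθ₁ : θ ≤ 1) : min 1 t ≤ t ^ θ := by
  rcases le_total 1 t with h1t | ht1
  · exact (min_le_left _ _).trans (one_le_rpow h1t hθ₀)
  · calc min 1 t ≤ t ^ (1 : ℝ) := by rw [rpow_one]; exact min_le_right _ _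
      _ ≤ t ^ θ := rpow_le_rpow_of_exponent_ge' ht ht1 hθ₀ hθ₁

lemma memLp_min_one_norm {p r : ℝ≥0∞} (hr₀ : r ≠ 0) (hr : r ≠ ∞) (hrp : r ≤ p)
    (hf : MemLp f r μ) : MemLp (fun x => min 1 ‖f x‖) p μ := by
  have hθ : (r / p).toReal ≤ 1 := ENNReal.toReal_le_of_le_ofReal zero_le_one
    (by simpa using ENNReal.div_le_of_le_mul (by simpa using hrp))
  have hpow : MemLp (fun x => ‖f x‖ ^ (r / p).toReal) p μ := by
    simpa only [ENNReal.div_div_cancel hr₀ hr] using hf.norm_rpow_div (r / p)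
  refine hpow.mono (aestronglyMeasurable_const.inf hf.1.norm) (.of_forall fun x => ?_)
  rw [norm_of_nonneg (by positivity), norm_of_nonneg (by positivity)]
  exact min_one_le_rpow (norm_nonneg _) ENNReal.toReal_nonneg hθ

lemma rpow_le_rpow_add_rpow {t a b c : ℝ} (ht : 0 ≤ t) (ha : 0 ≤ a) (hb : b ∈ Icc a c) :
    t ^ b ≤ t ^ a + t ^ c := by
  rcases le_total 1 t with h1t | ht1
  · exact (rpow_le_rpow_of_exponent_le h1t hb.2).trans (le_add_of_nonneg_left (by positivity))
  · exact (rpow_le_rpow_of_exponent_ge' ht ht1 ha hb.1).trans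
      (le_add_of_nonneg_right (by positivity))

lemma integrable_norm_rpow_of_mem_Icc {a b c : ℝ} (ha : 0 ≤ a) (hb : b ∈ Icc a c)
    (hf : AEStronglyMeasurable f μ) (hfa : Integrable (fun x => ‖f x‖ ^ a) μ)
    (hfc : Integrable (fun x => ‖f x‖ ^ c) μ) : Integrable (fun x => ‖f x‖ ^ b) μ := by
  refine (hfa.add hfc).mono' (hf.norm.aemeasurable.pow_const b).aestronglyMeasurable
    (.of_forall fun x => ?_)
  rw [norm_of_nonneg (by positivity)]
  exact rpow_le_rpow_add_rpow (norm_nonneg _) ha hb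

end Lebesgue

section SineCutoff

variable {E : Type*} [NormedAddCommGroup E] [NormedSpace ℝ E] {φ w : E → ℝ} {ε : ℝ} {x : E}

/-- The compactly supported approximation `φ(εx) ε⁻¹ sin(ε w(x))` of a function `w`, for a cutoff
function `φ` and a scale `ε ≠ 0`: the factor `φ(εx)` localises `w`, and the sine truncates its
values at height `ε⁻¹` without increasing its gradient. -/
def sineCutoff (φ w : E → ℝ) (ε : ℝ) (x : E) : ℝ :=
  φ (ε • x) * (ε⁻¹ * sin (ε * w x))

lemma contDiff_sineCutoff {n : WithTop ℕ∞} (hφ : ContDiff ℝ n φ) (hw : ContDiff ℝ n w) :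
    ContDiff ℝ n (sineCutoff φ w ε) := by
  unfold sineCutoff
  fun_prop

lemma hasCompactSupport_sineCutoff (hφ : HasCompactSupport φ) (hε : ε ≠ 0) :
    HasCompactSupport (sineCutoff φ w ε) :=
  (hφ.comp_smul hε).mul_right

lemma hasFDerivAt_sineCutoff (hφ : DifferentiableAt ℝ φ (ε • x)) (hw : DifferentiableAt ℝ w x)
    (hε : ε ≠ 0) :
    HasFDerivAt (sineCutoff φ w ε)
      ((φ (ε • x) * cos (ε * w x)) • fderiv ℝ w x + sin (ε * w x) • fderiv ℝ φ (ε • x)) x := by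
  have hφε : HasFDerivAt (fun y => φ (ε • y)) (ε • fderiv ℝ φ (ε • x)) x :=
    (hφ.hasFDerivAt.comp x ((hasFDerivAt_id x).const_smul ε)).congr_fderiv (by simp)
  have hsin : HasFDerivAt (fun y => ε⁻¹ * sin (ε * w y)) (cos (ε * w x) • fderiv ℝ w x) x := by
    simpa [smul_smul, mul_comm, mul_left_comm, hε]
      using ((hw.hasFDerivAt.const_mul ε).sin).const_mul ε⁻¹
  refine (hφε.mul hsin).congr_fderiv ?_
  rw [smul_smul, smul_smul, mul_right_comm, inv_mul_cancel₀ hε, one_mul]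

lemma abs_sin_mul_le_min_one (hε : |ε| ≤ 1) (t : ℝ) : |sin (ε * t)| ≤ min 1 |t| := by
  refine le_min (abs_sin_le_one _) (abs_sin_le_abs.trans ?_)
  rw [abs_mul]
  exact mul_le_of_le_one_left (abs_nonneg t) hε

lemma norm_fderiv_sineCutoff_le {K : ℝ} (hφ : DifferentiableAt ℝ φ (ε • x))
    (hw : DifferentiableAt ℝ w x) (hε₀ : ε ≠ 0) (hε : |ε| ≤ 1) (hφ₁ : |φ (ε • x)| ≤ 1)
    (hK : ‖fderiv ℝ φ (ε • x)‖ ≤ K) :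
    ‖fderiv ℝ (sineCutoff φ w ε) x‖ ≤ ‖fderiv ℝ w x‖ + K * min 1 ‖w x‖ := by
  have hcos : |φ (ε • x) * cos (ε * w x)| ≤ 1 := by
    rw [abs_mul]
    exact mul_le_one₀ hφ₁ (abs_nonneg _) (abs_cos_le_one _)
  rw [(hasFDerivAt_sineCutoff hφ hw hε₀).fderiv]
  calc ‖(φ (ε • x) * cos (ε * w x)) • fderiv ℝ w x + sin (ε * w x) • fderiv ℝ φ (ε • x)‖
      ≤ |φ (ε • x) * cos (ε * w x)| * ‖fderiv ℝ w x‖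
          + |sin (ε * w x)| * ‖fderiv ℝ φ (ε • x)‖ := by
        simpa only [norm_smul, norm_eq_abs] using norm_add_le
          ((φ (ε • x) * cos (ε * w x)) • fderiv ℝ w x) (sin (ε * w x) • fderiv ℝ φ (ε • x))
    _ ≤ 1 * ‖fderiv ℝ w x‖ + min 1 |w x| * K := by
        gcongr
        exact abs_sin_mul_le_min_one hε (w x)
    _ = ‖fderiv ℝ w x‖ + K * min 1 ‖w x‖ := by rw [one_mul, mul_comm K, norm_eq_abs]

lemma tendsto_inv_mul_sin_mul (t : ℝ) :
    Tendsto (fun ε => ε⁻¹ * sin (ε * t)) (𝓝[≠] 0) (𝓝 t) := by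
  have hderiv : HasDerivAt (fun ε => sin (ε * t)) t 0 := by
    simpa using ((hasDerivAt_id (0 : ℝ)).mul_const t).sin
  simpa using hasDerivAt_iff_tendsto_slope_zero.mp hderiv

lemma tendsto_sineCutoff (hφ : ContinuousAt φ 0) (hφ₀ : φ 0 = 1) (w : E → ℝ) (x : E) :
    Tendsto (fun ε => sineCutoff φ w ε x) (𝓝[≠] 0) (𝓝 (w x)) := by
  have hsmul : Tendsto (fun ε : ℝ => ε • x) (𝓝[≠] 0) (𝓝 0) := by
    have hcont : Continuous fun ε : ℝ => ε • x := by fun_prop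
    simpa using (hcont.tendsto 0).mono_left nhdsWithin_le_nhds
  simpa [sineCutoff, hφ₀] using (hφ.tendsto.comp hsmul).mul (tendsto_inv_mul_sin_mul (w x))

end SineCutoff

section Sobolev

variable {E : Type*} [NormedAddCommGroup E] [NormedSpace ℝ E] [FiniteDimensional ℝ E]

lemma exists_contDiff_hasCompactSupport_cutoff :
    ∃ (φ : E → ℝ) (K : ℝ), ContDiff ℝ 1 φ ∧ HasCompactSupport φ ∧ φ 0 = 1 ∧
      (∀ x, |φ x| ≤ 1) ∧ ∀ x, ‖fderiv ℝ φ x‖ ≤ K := by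
  let φ : ContDiffBump (0 : E) := ⟨1, 2, one_pos, one_lt_two⟩
  have hφ : ContDiff ℝ 1 φ := φ.contDiff
  obtain ⟨K, hK⟩ := (φ.hasCompactSupport.fderiv (𝕜 := ℝ)).exists_bound_of_continuous
    (hφ.continuous_fderiv one_ne_zero)
  refine ⟨φ, K, hφ, φ.hasCompactSupport, ?_, fun x => ?_, hK⟩
  · exact φ.one_of_mem_closedBall (Metric.mem_closedBall_self φ.rIn_pos.le)
  · exact (abs_of_nonneg φ.nonneg).trans_le φ.le_one

variable [MeasurableSpace E] [BorelSpace E] {μ : Measure E}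

lemma memLp_fderiv_sq {u : E → ℝ} (hu : ContDiff ℝ 1 u)
    (hdu : Integrable (fun x => u x ^ 2 * ‖fderiv ℝ u x‖ ^ 2) μ) :
    MemLp (fderiv ℝ fun x => u x ^ 2) 2 μ := by
  have hcont : Continuous (fderiv ℝ fun x => u x ^ 2) :=
    (hu.pow 2).continuous_fderiv one_ne_zero
  have hnorm (x : E) :
      ‖fderiv ℝ (fun x => u x ^ 2) x‖ ^ 2 = 4 * (u x ^ 2 * ‖fderiv ℝ u x‖ ^ 2) := by
    rw [fderiv_fun_pow 2 (hu.differentiable one_ne_zero x), norm_smul, mul_pow, norm_eq_abs, sq_abs]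
    ring
  rw [memLp_two_iff_integrable_sq_norm hcont.aestronglyMeasurable]
  simpa only [hnorm] using hdu.const_mul 4

variable [μ.IsAddHaarMeasure]

theorem memLp_of_memLp_fderiv {w : E → ℝ} {p p' : ℝ≥0} {r : ℝ≥0∞} (hp : 1 ≤ p)
    (hn : 0 < finrank ℝ E) (hp' : (p' : ℝ)⁻¹ = (p : ℝ)⁻¹ - (finrank ℝ E : ℝ)⁻¹) (hr₀ : r ≠ 0)
    (hrp : r ≤ p) (hw : ContDiff ℝ 1 w) (hwr : MemLp w r μ) (hdw : MemLp (fderiv ℝ w) p μ) :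
    MemLp w p' μ := by
  obtain ⟨φ, K, hφ, hφsupp, hφ₀, hφ₁, hK⟩ := exists_contDiff_hasCompactSupport_cutoff (E := E)
  let g : E → ℝ := fun x => ‖fderiv ℝ w x‖ + K * min 1 ‖w x‖
  have hg : MemLp g p μ := hdw.norm.add
    ((memLp_min_one_norm hr₀ (ne_top_of_le_ne_top ENNReal.coe_ne_top hrp) hrp hwr).const_mul K)
  have hbound {ε : ℝ} (hε : ε ∈ Ioc (0 : ℝ) 1) : eLpNorm (sineCutoff φ w ε) p' μ
      ≤ eLpNormLESNormFDerivOfEqInnerConst μ p * eLpNorm g p μ := by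
    have hdom (x : E) : ‖fderiv ℝ (sineCutoff φ w ε) x‖ ≤ g x :=
      norm_fderiv_sineCutoff_le (hφ.differentiable one_ne_zero _) (hw.differentiable one_ne_zero _)
        hε.1.ne' ((abs_of_pos hε.1).trans_le hε.2) (hφ₁ _) (hK _)
    calc eLpNorm (sineCutoff φ w ε) p' μ
        ≤ eLpNormLESNormFDerivOfEqInnerConst μ p * eLpNorm (fderiv ℝ (sineCutoff φ w ε)) p μ :=
          eLpNorm_le_eLpNorm_fderiv_of_eq_inner μ (contDiff_sineCutoff hφ hw)
            (hasCompactSupport_sineCutoff hφsupp hε.1.ne') hp hn hp'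
      _ ≤ eLpNormLESNormFDerivOfEqInnerConst μ p * eLpNorm g p μ := by
          gcongr
          exact eLpNorm_mono_real hdom
  have hle : eLpNorm w p' μ ≤ eLpNormLESNormFDerivOfEqInnerConst μ p * eLpNorm g p μ :=
    Lp.eLpNorm_le_of_ae_tendsto (u := 𝓝[>] 0)
      (mem_of_superset (Ioc_mem_nhdsGT zero_lt_one) fun _ => hbound)
      (fun _ => (contDiff_sineCutoff hφ hw).continuous.aestronglyMeasurable)
      (.of_forall fun x => (tendsto_sineCutoff hφ.continuous.continuousAt hφ₀ w x).mono_left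
        (nhdsGT_le_nhdsNE 0))
  exact ⟨hw.continuous.aestronglyMeasurable,
    hle.trans_lt (ENNReal.mul_lt_top ENNReal.coe_lt_top hg.2)⟩

theorem integrable_abs_rpow_critical (hn : 2 < finrank ℝ E) {u : E → ℝ} (hu : ContDiff ℝ 1 u)
    (hu₂ : Integrable (fun x => u x ^ 2) μ)
    (hdu : Integrable (fun x => u x ^ 2 * ‖fderiv ℝ u x‖ ^ 2) μ) :
    Integrable (fun x => |u x| ^ (4 * (finrank ℝ E : ℝ) / (finrank ℝ E - 2))) μ := by
  have hn' : (0 : ℝ) < finrank ℝ E - 2 := sub_pos.mpr (mod_cast hn)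
  have hn₀ : (0 : ℝ) < finrank ℝ E := by linarith
  have hq_pos : (0 : ℝ) < 2 * finrank ℝ E / (finrank ℝ E - 2) :=
    div_pos (mul_pos two_pos hn₀) hn'
  let q : ℝ≥0 := ⟨2 * finrank ℝ E / (finrank ℝ E - 2), hq_pos.le⟩
  have hq : (q : ℝ)⁻¹ = ((2 : ℝ≥0) : ℝ)⁻¹ - (finrank ℝ E : ℝ)⁻¹ := by
    change (2 * (finrank ℝ E : ℝ) / (finrank ℝ E - 2))⁻¹ = 2⁻¹ - (finrank ℝ E : ℝ)⁻¹
    field_simp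
  have hsq : MemLp (fun x => u x ^ 2) q μ :=
    memLp_of_memLp_fderiv one_le_two (by lia) hq one_ne_zero (by norm_num) (hu.pow 2)
      (memLp_one_iff_integrable.mpr hu₂) (memLp_fderiv_sq hu hdu)
  refine (hsq.integrable_norm_rpow (ENNReal.coe_pos.mpr hq_pos).ne' ENNReal.coe_ne_top).congr
    (.of_forall fun x => ?_)
  change ‖u x ^ 2‖ ^ (2 * (finrank ℝ E : ℝ) / (finrank ℝ E - 2)) = _
  rw [norm_pow, norm_eq_abs, ← rpow_natCast, ← rpow_mul (abs_nonneg _)]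
  congr 1
  push_cast
  ring

theorem stmt17_general (hn : 2 < finrank ℝ E) {p : ℝ} (hp : 1 ≤ p)
    (hpmax : p ≤ (3 * (finrank ℝ E : ℝ) + 2) / ((finrank ℝ E : ℝ) - 2)) {u : E → ℝ}
    (hu : ContDiff ℝ 1 u) (hu₂ : Integrable (fun x => u x ^ 2) μ)
    (hdu : Integrable (fun x => u x ^ 2 * ‖fderiv ℝ u x‖ ^ 2) μ) :
    Integrable (fun x => |u x| ^ (p + 1)) μ := by
  have hn' : (finrank ℝ E : ℝ) - 2 ≠ 0 := (sub_pos.mpr (mod_cast hn)).ne'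
  have hcritical : (3 * (finrank ℝ E : ℝ) + 2) / (finrank ℝ E - 2) + 1
      = 4 * (finrank ℝ E : ℝ) / (finrank ℝ E - 2) := by
    field_simp
    ring
  have hmem : p + 1 ∈ Icc 2 (4 * (finrank ℝ E : ℝ) / (finrank ℝ E - 2)) :=
    ⟨by linarith, by linarith⟩
  exact integrable_norm_rpow_of_mem_Icc zero_le_two hmem hu.continuous.aestronglyMeasurable
    (by simpa using hu₂) (integrable_abs_rpow_critical hn hu hu₂ hdu)

end Sobolev

lemma gradsq_eq_norm_fderiv_sq {N : ℕ} (f : EuclideanSpace ℝ (Fin N) → ℝ)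
    (x : EuclideanSpace ℝ (Fin N)) : gradsq f x = ‖fderiv ℝ f x‖ ^ 2 := by
  simp only [(EuclideanSpace.basisFun (Fin N) ℝ).norm_dual, EuclideanSpace.basisFun_apply, gradsq,
    pd]

/-- Embedding of `X = {u ∈ H¹ : ∫ u²|∇u|² < ∞}` into `L^{p+1}(ℝ^N)` for
`1 < p ≤ (3N+2)/(N−2)`, `N ≥ 3`. -/
theorem stmt17 (N : ℕ) (hN : 3 ≤ N) (p : ℝ) (hp : 1 < p)
    (hpmax : p ≤ (3 * (N : ℝ) + 2) / ((N : ℝ) - 2))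
    (u : EuclideanSpace ℝ (Fin N) → ℝ) (hsm : ContDiff ℝ (⊤ : ℕ∞) u)
    (h1 : Integrable (fun x => (u x) ^ 2))
    (h2 : Integrable (fun x => gradsq u x))
    (h3 : Integrable (fun x => (u x) ^ 2 * gradsq u x)) :
    Integrable (fun x => |u x| ^ (p + 1)) := by
  simp only [gradsq_eq_norm_fderiv_sq] at h3
  exact stmt17_general (by simpa using show 2 < N from hN) hp.le (by simpa using hpmax)
    (hsm.of_le (mod_cast le_top)) h1 h3

end
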